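/- Hyperbolic balls of equal radius have equal hyperbolic volume: for every n ≥ 1, every point x in the open unit ball B ⊂ ℝ^n, and every r > 0, one has μ_n({y ∈ B : d_K(x, y) < r}) = μ_n({y ∈ B : d_K(0, y) < r}). -/

import Mathlib

open MeasureTheory Metric Set
open scoped RealInnerProductSpace

/-- Hyperbolic volume in the Klein model: Lebesgue measure with density
`x ↦ (1 - ‖x‖²)^{-(n+1)/2}`, restricted to the open unit ball. -/
noncomputable def hypVol (n : ℕ) : Measure (EuclideanSpace ℝ (Fin n)) :=
  (((volume : Measure (EuclideanSpace ℝ (Fin n)))).restrict (ball 0 1)).withDensity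
    fun x => ENNReal.ofReal ((1 - ‖x‖ ^ 2) ^ (-((n : ℝ) + 1) / 2))

/-- Inverse hyperbolic cosine. -/
noncomputable def arcosh (x : ℝ) : ℝ := Real.log (x + Real.sqrt (x ^ 2 - 1))

/-- The hyperbolic distance in the Klein model. -/
noncomputable def dK {n : ℕ} (x y : EuclideanSpace ℝ (Fin n)) : ℝ :=
  arcosh ((1 - ⟪x, y⟫) / Real.sqrt ((1 - ‖x‖ ^ 2) * (1 - ‖y‖ ^ 2)))

/-!
The point reflection of hyperbolic space through `m` fixes `m` and preserves every line through `m`,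
so in the Klein model it has the form `y ↦ m + c • (m - y)` for a scalar `c` depending on `y`.
The same scalar governs all the invariants: `1 - ⟪y, z⟫` is multiplied by `c(y) c(z)`, whence the
reflection preserves `dK`, and the absolute Jacobian is `c ^ (n + 1)`, which cancels the change of
the density. Any `x` in the ball is the image of `0` under the reflection through the hyperbolic
midpoint of `0` and `x`.
-/

lemma one_sub_norm_sq_pos {E : Type*} [SeminormedAddCommGroup E] {y : E} (hy : ‖y‖ < 1) :
    0 < 1 - ‖y‖ ^ 2 :=
  sub_pos.2 (pow_lt_one₀ (norm_nonneg y) hy two_ne_zero)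

lemma pow_mul_sq_mul_rpow_neg_half {c u : ℝ} (hc : 0 < c) (hu : 0 ≤ u) (k : ℕ) :
    c ^ k * (c ^ 2 * u) ^ (-(k : ℝ) / 2) = u ^ (-(k : ℝ) / 2) := by
  have hcancel : c ^ k * (c ^ 2) ^ (-(k : ℝ) / 2) = 1 := by
    rw [← Real.rpow_natCast, ← Real.rpow_natCast, ← Real.rpow_mul hc.le, ← Real.rpow_add hc,
      Nat.cast_ofNat, mul_div_cancel₀ _ two_ne_zero, add_neg_cancel, Real.rpow_zero]
  rw [Real.mul_rpow (sq_nonneg c) hu, ← mul_assoc, hcancel, one_mul]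

section PointReflection

variable {E : Type*} [NormedAddCommGroup E] [InnerProductSpace ℝ E] {m y z : E}

/-- The factor by which the Klein point reflection through `m` stretches the vector from `y` to `m`.
It is the ratio of the time coordinates of `(1, y)` and of its image under the Lorentz reflection
`v ↦ 2 (⟨v, M⟩ / ⟨M, M⟩) M - v`, where `M = (1, m)`. -/
noncomputable def kleinRatio (m y : E) : ℝ :=
  (1 - ‖m‖ ^ 2) / (1 - 2 * ⟪m, y⟫ + ‖m‖ ^ 2)

/-- The point reflection of hyperbolic space through `m`, in the Klein model. -/
noncomputable def kleinPointReflection (m y : E) : E :=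
  m + kleinRatio m y • (m - y)

lemma kleinRatio_denom_pos (m : E) (hy : ‖y‖ < 1) : 0 < 1 - 2 * ⟪m, y⟫ + ‖m‖ ^ 2 := by
  have h : 1 - 2 * ⟪m, y⟫ + ‖m‖ ^ 2 = (1 - ‖y‖ ^ 2) + ‖m - y‖ ^ 2 := by
    rw [norm_sub_sq_real]
    ring
  have := one_sub_norm_sq_pos hy
  rw [h]
  positivity

lemma kleinRatio_pos (hm : ‖m‖ < 1) (hy : ‖y‖ < 1) : 0 < kleinRatio m y :=
  div_pos (one_sub_norm_sq_pos hm) (kleinRatio_denom_pos m hy)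

lemma one_sub_inner_kleinPointReflection (m : E) (hy : ‖y‖ < 1) (hz : ‖z‖ < 1) :
    1 - ⟪kleinPointReflection m y, kleinPointReflection m z⟫ =
      kleinRatio m y * kleinRatio m z * (1 - ⟪y, z⟫) := by
  have hDy := (kleinRatio_denom_pos m hy).ne'
  have hDz := (kleinRatio_denom_pos m hz).ne'
  simp only [kleinPointReflection, inner_add_left, inner_add_right, inner_sub_left,
    inner_sub_right, real_inner_smul_left, real_inner_smul_right, real_inner_self_eq_norm_sq,
    real_inner_comm m y, kleinRatio]
  field_simp
  ring

lemma one_sub_norm_sq_kleinPointReflection (m : E) (hy : ‖y‖ < 1) :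
    1 - ‖kleinPointReflection m y‖ ^ 2 = kleinRatio m y ^ 2 * (1 - ‖y‖ ^ 2) := by
  simpa only [real_inner_self_eq_norm_sq, ← sq] using one_sub_inner_kleinPointReflection m hy hy

lemma norm_kleinPointReflection_lt_one (hm : ‖m‖ < 1) (hy : ‖y‖ < 1) :
    ‖kleinPointReflection m y‖ < 1 := by
  have h : 0 < 1 - ‖kleinPointReflection m y‖ ^ 2 := by
    rw [one_sub_norm_sq_kleinPointReflection m hy]
    exact mul_pos (pow_pos (kleinRatio_pos hm hy) 2) (one_sub_norm_sq_pos hy)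
  exact (sq_lt_one_iff₀ (norm_nonneg _)).1 (sub_pos.1 h)

lemma mapsTo_kleinPointReflection (hm : ‖m‖ < 1) :
    MapsTo (kleinPointReflection m) (ball 0 1) (ball 0 1) := fun _ hy =>
  mem_ball_zero_iff.2 (norm_kleinPointReflection_lt_one hm (mem_ball_zero_iff.1 hy))

lemma kleinRatio_kleinPointReflection (hm : ‖m‖ < 1) (hy : ‖y‖ < 1) :
    kleinRatio m (kleinPointReflection m y) = (kleinRatio m y)⁻¹ := by
  have hδ := (one_sub_norm_sq_pos hm).ne'
  have hdenom : 1 - 2 * ⟪m, kleinPointReflection m y⟫ + ‖m‖ ^ 2 =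
      (1 - ‖m‖ ^ 2) * kleinRatio m y := by
    have hD := (kleinRatio_denom_pos m hy).ne'
    rw [kleinPointReflection, inner_add_right, real_inner_smul_right, inner_sub_right,
      real_inner_self_eq_norm_sq, kleinRatio]
    field_simp
    ring
  rw [kleinRatio, hdenom, div_mul_cancel_left₀ hδ]

lemma kleinPointReflection_kleinPointReflection (hm : ‖m‖ < 1) (hy : ‖y‖ < 1) :
    kleinPointReflection m (kleinPointReflection m y) = y := by
  rw [kleinPointReflection, kleinRatio_kleinPointReflection hm hy, kleinPointReflection,
    sub_add_cancel_left, smul_neg, inv_smul_smul₀ (kleinRatio_pos hm hy).ne', neg_sub,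
    add_sub_cancel]

lemma invOn_kleinPointReflection (hm : ‖m‖ < 1) :
    InvOn (kleinPointReflection m) (kleinPointReflection m) (ball 0 1) (ball 0 1) :=
  have h : LeftInvOn (kleinPointReflection m) (kleinPointReflection m) (ball 0 1) := fun _ hy =>
    kleinPointReflection_kleinPointReflection hm (mem_ball_zero_iff.1 hy)
  ⟨h, h⟩

lemma exists_kleinPointReflection_zero_eq {x : E} (hx : ‖x‖ < 1) :
    ∃ m : E, ‖m‖ < 1 ∧ kleinPointReflection m 0 = x := by
  set s := √(1 - ‖x‖ ^ 2)
  have hs : 0 < s := Real.sqrt_pos.2 (one_sub_norm_sq_pos hx)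
  have hxs : ‖x‖ ^ 2 = 1 - s ^ 2 := by
    rw [Real.sq_sqrt (one_sub_norm_sq_pos hx).le, sub_sub_cancel]
  have hnorm : ‖(1 + s)⁻¹ • x‖ ^ 2 = (1 - s) / (1 + s) := by
    rw [norm_smul, mul_pow, hxs, Real.norm_of_nonneg (by positivity)]
    field_simp
    ring
  have hratio : kleinRatio ((1 + s)⁻¹ • x) 0 = s := by
    rw [kleinRatio, hnorm, inner_zero_right]
    field_simp
    ring
  refine ⟨(1 + s)⁻¹ • x, ?_, ?_⟩
  · rw [← sq_lt_one_iff₀ (norm_nonneg _), hnorm, div_lt_one (by positivity)]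
    linarith
  · rw [kleinPointReflection, hratio, sub_zero]
    match_scalars
    field_simp

/-- The derivative of `kleinPointReflection m` at `y`: a transvection times the scalar
`-kleinRatio m y`. -/
noncomputable def kleinPointReflectionFDeriv (m y : E) : E →L[ℝ] E :=
  -kleinRatio m y • (ContinuousLinearMap.id ℝ E +
    (innerSL ℝ m).smulRight ((-2 / (1 - 2 * ⟪m, y⟫ + ‖m‖ ^ 2)) • (m - y)))

lemma hasFDerivAt_kleinRatio (m : E) (hy : ‖y‖ < 1) :
    HasFDerivAt (kleinRatio m)
      ((2 * kleinRatio m y / (1 - 2 * ⟪m, y⟫ + ‖m‖ ^ 2)) • innerSL ℝ m) y := by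
  have hD := (kleinRatio_denom_pos m hy).ne'
  have hdenom : HasFDerivAt (fun z => 1 - 2 * ⟪m, z⟫ + ‖m‖ ^ 2) (-((2 : ℝ) • innerSL ℝ m)) y :=
    (((innerSL ℝ m).hasFDerivAt.const_mul 2).const_sub 1).add_const _
  refine (((hasDerivAt_inv hD).comp_hasFDerivAt y hdenom).const_mul (1 - ‖m‖ ^ 2)).congr_fderiv ?_
  rw [kleinRatio]
  match_scalars
  field_simp

lemma hasFDerivAt_kleinPointReflection (m : E) (hy : ‖y‖ < 1) :
    HasFDerivAt (kleinPointReflection m) (kleinPointReflectionFDeriv m y) y := by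
  refine (((hasFDerivAt_kleinRatio m hy).smul ((hasFDerivAt_id y).const_sub m)).const_add
    m).congr_fderiv ?_
  ext h
  simp only [kleinPointReflectionFDeriv, add_apply, smul_apply, neg_apply,
    ContinuousLinearMap.smulRight_apply, ContinuousLinearMap.id_apply, id]
  module

lemma abs_det_kleinPointReflectionFDeriv [FiniteDimensional ℝ E] (hm : ‖m‖ < 1) (hy : ‖y‖ < 1) :
    |(kleinPointReflectionFDeriv m y).det| = kleinRatio m y ^ (Module.finrank ℝ E + 1) := by
  set v := (-2 / (1 - 2 * ⟪m, y⟫ + ‖m‖ ^ 2)) • (m - y)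
  have hcoe : (kleinPointReflectionFDeriv m y : E →ₗ[ℝ] E) =
      -kleinRatio m y • LinearMap.transvection (innerSL ℝ m : E →ₗ[ℝ] ℝ) v := by
    ext h
    rfl
  have hinner : 1 + ⟪m, v⟫ = kleinRatio m y := by
    have hD := (kleinRatio_denom_pos m hy).ne'
    rw [real_inner_smul_right, inner_sub_right, real_inner_self_eq_norm_sq, kleinRatio]
    field_simp
    ring
  rw [ContinuousLinearMap.det, hcoe, LinearMap.det_smul, LinearMap.transvection.det,
    ContinuousLinearMap.coe_coe, innerSL_apply_apply, hinner, abs_mul, abs_pow, abs_neg,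
    abs_of_pos (kleinRatio_pos hm hy), ← pow_succ]

lemma setLIntegral_image_kleinPointReflection [FiniteDimensional ℝ E] [MeasurableSpace E]
    [BorelSpace E] (μ : Measure E) [μ.IsAddHaarMeasure] (hm : ‖m‖ < 1) {S : Set E}
    (hS : MeasurableSet S) (hSB : S ⊆ ball 0 1) :
    ∫⁻ y in kleinPointReflection m '' S,
        ENNReal.ofReal ((1 - ‖y‖ ^ 2) ^ (-((Module.finrank ℝ E : ℝ) + 1) / 2)) ∂μ =
      ∫⁻ y in S, ENNReal.ofReal ((1 - ‖y‖ ^ 2) ^ (-((Module.finrank ℝ E : ℝ) + 1) / 2)) ∂μ := by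
  have hlt : ∀ y ∈ S, ‖y‖ < 1 := fun y hy => mem_ball_zero_iff.1 (hSB hy)
  rw [lintegral_image_eq_lintegral_abs_det_fderiv_mul μ hS
    (fun y hy => (hasFDerivAt_kleinPointReflection m (hlt y hy)).hasFDerivWithinAt)
    ((invOn_kleinPointReflection hm).1.injOn.mono hSB)]
  refine setLIntegral_congr_fun hS fun y hy => ?_
  rw [← ENNReal.ofReal_mul (abs_nonneg _), abs_det_kleinPointReflectionFDeriv hm (hlt y hy),
    one_sub_norm_sq_kleinPointReflection m (hlt y hy), ← Nat.cast_succ,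
    pow_mul_sq_mul_rpow_neg_half (kleinRatio_pos hm (hlt y hy)) (one_sub_norm_sq_pos (hlt y hy)).le]

end PointReflection

section HyperbolicVolume

variable {n : ℕ} {m y z : EuclideanSpace ℝ (Fin n)}

lemma hypVol_apply {S : Set (EuclideanSpace ℝ (Fin n))} (hS : MeasurableSet S)
    (hSB : S ⊆ ball 0 1) :
    hypVol n S = ∫⁻ y in S, ENNReal.ofReal ((1 - ‖y‖ ^ 2) ^ (-((n : ℝ) + 1) / 2)) := by
  rw [hypVol, withDensity_apply _ hS, Measure.restrict_restrict hS, inter_eq_left.2 hSB]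

lemma hypVol_image_kleinPointReflection (hm : ‖m‖ < 1) {S : Set (EuclideanSpace ℝ (Fin n))}
    (hS : MeasurableSet S) (hSB : S ⊆ ball 0 1) :
    hypVol n (kleinPointReflection m '' S) = hypVol n S := by
  have himage : MeasurableSet (kleinPointReflection m '' S) :=
    measurable_image_of_fderivWithin hS
      (fun y hy => (hasFDerivAt_kleinPointReflection m
        (mem_ball_zero_iff.1 (hSB hy))).hasFDerivWithinAt)
      ((invOn_kleinPointReflection hm).1.injOn.mono hSB)
  rw [hypVol_apply himage ((mapsTo_kleinPointReflection hm).mono_left hSB).image_subset,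
    hypVol_apply hS hSB]
  simpa only [finrank_euclideanSpace_fin] using
    setLIntegral_image_kleinPointReflection volume hm hS hSB

lemma dK_kleinPointReflection (hm : ‖m‖ < 1) (hy : ‖y‖ < 1) (hz : ‖z‖ < 1) :
    dK (kleinPointReflection m y) (kleinPointReflection m z) = dK y z := by
  have hc : 0 < kleinRatio m y * kleinRatio m z :=
    mul_pos (kleinRatio_pos hm hy) (kleinRatio_pos hm hz)
  rw [dK, dK, one_sub_inner_kleinPointReflection m hy hz,
    one_sub_norm_sq_kleinPointReflection m hy, one_sub_norm_sq_kleinPointReflection m hz,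
    mul_mul_mul_comm, ← mul_pow, Real.sqrt_mul (sq_nonneg _), Real.sqrt_sq hc.le,
    mul_div_mul_left _ _ hc.ne']

lemma measurableSet_dK_ball (x : EuclideanSpace ℝ (Fin n)) (r : ℝ) :
    MeasurableSet {y ∈ ball (0 : EuclideanSpace ℝ (Fin n)) 1 | dK x y < r} := by
  have hdK : Measurable (dK x) := by
    unfold dK arcosh
    fun_prop
  exact measurableSet_ball.inter (measurableSet_lt hdK measurable_const)

lemma image_kleinPointReflection_dK_ball (hm : ‖m‖ < 1) (hz : ‖z‖ < 1) (r : ℝ) :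
    kleinPointReflection m '' {y ∈ ball (0 : EuclideanSpace ℝ (Fin n)) 1 | dK z y < r} =
      {y ∈ ball (0 : EuclideanSpace ℝ (Fin n)) 1 | dK (kleinPointReflection m z) y < r} := by
  have hmaps : ∀ w : EuclideanSpace ℝ (Fin n), ‖w‖ < 1 →
      MapsTo (kleinPointReflection m) {y ∈ ball 0 1 | dK w y < r}
        {y ∈ ball 0 1 | dK (kleinPointReflection m w) y < r} := fun w hw y hy =>
    ⟨mapsTo_kleinPointReflection hm hy.1,
      (dK_kleinPointReflection hm hw (mem_ball_zero_iff.1 hy.1)).trans_lt hy.2⟩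
  have hmaps_symm := hmaps _ (norm_kleinPointReflection_lt_one hm hz)
  rw [kleinPointReflection_kleinPointReflection hm hz] at hmaps_symm
  exact (((invOn_kleinPointReflection hm).mono (sep_subset _ _) (sep_subset _ _)).bijOn
    (hmaps z hz) hmaps_symm).image_eq

end HyperbolicVolume

theorem hypVol_ball_eq_of_center (n : ℕ) (hn : 1 ≤ n)
    (x : EuclideanSpace ℝ (Fin n)) (hx : x ∈ ball (0 : EuclideanSpace ℝ (Fin n)) 1)
    (r : ℝ) (hr : 0 < r) :
    hypVol n {y ∈ ball (0 : EuclideanSpace ℝ (Fin n)) 1 | dK x y < r} =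
      hypVol n {y ∈ ball (0 : EuclideanSpace ℝ (Fin n)) 1 | dK 0 y < r} := by
  obtain ⟨m, hm, rfl⟩ := exists_kleinPointReflection_zero_eq (mem_ball_zero_iff.1 hx)
  rw [← image_kleinPointReflection_dK_ball hm (norm_zero.trans_lt one_pos),
    hypVol_image_kleinPointReflection hm (measurableSet_dK_ball 0 r) (sep_subset _ _)]
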